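/- arXiv:2003.05537 — 14 statements merged into one kernel-verified Lean document; each statement's English description precedes it below -/
import Mathlib

section
/- Let I be an n-semiprimary ideal of a commutative ring R. Then the radical √I is a prime ideal of R, and x^n ∈ I for every x ∈ √I (equivalently, x ∈ √I if and only if x^n ∈ I). -/
/-- A proper ideal `I` of a commutative ring `R` is an `n`-semiprimary ideal of `R` if
whenever `x^n * y^n ∈ I` for `x, y ∈ R`, then `x^n ∈ I` or `y^n ∈ I`. -/
def IsNSemiprimary {R : Type*} [CommRing R] (I : Ideal R) (n : ℕ) : Prop :=
  I ≠ ⊤ ∧ ∀ x y : R, x ^ n * y ^ n ∈ I → x ^ n ∈ I ∨ y ^ n ∈ I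

/-! If `x ^ k ∈ I`, then `(x ^ k) ^ n ∈ I`, and peeling off one factor `x ^ n` at a time shows that
`x ^ n ∈ I`. Hence `√I = {x | x ^ n ∈ I}`, and for this set the `n`-semiprimary condition is
primality. -/

theorem pow_mem_of_pow_pow_mem {M S : Type*} [Monoid M] [SetLike S M] {s : S} {n : ℕ}
    (one_notMem : (1 : M) ∉ s) (h : ∀ x y : M, x ^ n * y ^ n ∈ s → x ^ n ∈ s ∨ y ^ n ∈ s)
    {x : M} {k : ℕ} (hx : (x ^ k) ^ n ∈ s) : x ^ n ∈ s := by
  induction k with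
  | zero => exact absurd (by simpa using hx) one_notMem
  | succ k ih =>
    rw [pow_succ, ((Commute.refl x).pow_left k).mul_pow] at hx
    exact (h _ _ hx).elim ih id

theorem mem_radical_iff_pow_mem {R : Type*} [CommSemiring R] {n : ℕ} (hn : n ≠ 0) {I : Ideal R}
    (hI : I ≠ ⊤) (h : ∀ x y : R, x ^ n * y ^ n ∈ I → x ^ n ∈ I ∨ y ^ n ∈ I) {x : R} :
    x ∈ I.radical ↔ x ^ n ∈ I := by
  refine ⟨fun ⟨k, hk⟩ ↦ ?_, fun hx ↦ ⟨n, hx⟩⟩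
  have hkn : (x ^ k) ^ n ∈ I := I.pow_mem_of_mem hk n (Nat.pos_of_ne_zero hn)
  exact pow_mem_of_pow_pow_mem (I.ne_top_iff_one.mp hI) h hkn

theorem radical_isPrime_and_pow_mem_of_isNSemiprimary_general {R : Type*} [CommSemiring R]
    {n : ℕ} (hn : n ≠ 0) {I : Ideal R} (hI : I ≠ ⊤)
    (h : ∀ x y : R, x ^ n * y ^ n ∈ I → x ^ n ∈ I ∨ y ^ n ∈ I) :
    I.radical.IsPrime ∧ ∀ x : R, x ∈ I.radical ↔ x ^ n ∈ I := by
  have mem_radical (x : R) : x ∈ I.radical ↔ x ^ n ∈ I := mem_radical_iff_pow_mem hn hI h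
  refine ⟨⟨Ideal.radical_eq_top.not.mpr hI, fun {x y} hxy ↦ ?_⟩, mem_radical⟩
  rw [mem_radical, mul_pow] at hxy
  simpa only [mem_radical] using h x y hxy

/-- Let `I` be an `n`-semiprimary ideal of a commutative ring `R`. Then `√I` is a prime
ideal of `R`, and `x ∈ √I` if and only if `x^n ∈ I`. -/
theorem radical_isPrime_and_pow_mem_of_isNSemiprimary {R : Type*} [CommRing R]
    (n : ℕ) (hn : 0 < n) (I : Ideal R) (hI : IsNSemiprimary I n) :
    I.radical.IsPrime ∧ ∀ x : R, x ∈ I.radical ↔ x ^ n ∈ I :=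
  radical_isPrime_and_pow_mem_of_isNSemiprimary_general hn.ne' hI.1 hI.2
end

section
/- Let I be a proper ideal of a commutative ring R such that P = √I is a prime ideal of R and P^n ⊆ I for some positive integer n. Then I is an m-semiprimary ideal of R for every integer m ≥ n. -/
theorem isNSemiprimary_of_radical_pow_le_general {R : Type*} [CommRing R] {I : Ideal R}
    (hP : I.radical.IsPrime) {n m : ℕ} (hpow : ∀ x ∈ I.radical, x ^ n ∈ I) (hm : n ≤ m) :
    IsNSemiprimary I m := by
  have pow_mem : ∀ x ∈ I.radical, x ^ m ∈ I := fun x hx => I.pow_mem_of_pow_mem (hpow x hx) hm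
  refine ⟨mt Ideal.radical_eq_top.mpr hP.ne_top, fun x y hxy => ?_⟩
  have mul_mem_radical : x * y ∈ I.radical := ⟨m, by rwa [mul_pow]⟩
  exact (hP.mem_or_mem mul_mem_radical).imp (pow_mem x) (pow_mem y)

/-- Let `I` be a proper ideal of a commutative ring `R` such that `P = √I` is a prime ideal
of `R` and `P^n ⊆ I` for some positive integer `n`. Then `I` is an `m`-semiprimary ideal of
`R` for every integer `m ≥ n`. -/
theorem isNSemiprimary_of_radical_pow_le {R : Type*} [CommRing R]
    (I : Ideal R) (hI : I ≠ ⊤) (hP : I.radical.IsPrime)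
    (n : ℕ) (hn : 0 < n) (hpow : I.radical ^ n ≤ I)
    (m : ℕ) (hm : n ≤ m) :
    IsNSemiprimary I m :=
  isNSemiprimary_of_radical_pow_le_general hP (fun _ hx => hpow (Ideal.pow_mem_pow hx n)) hm
end

section
/- Let I be a proper ideal of a commutative Noetherian ring R such that √I is a prime ideal of R. Then there is a positive integer n such that I is an m-semiprimary ideal of R for every integer m ≥ n. -/
theorem exists_forall_pow_mem_of_fg_radical {R : Type*} [CommSemiring R] {I : Ideal R}
    (hfg : I.radical.FG) : ∃ n : ℕ, ∀ m, n ≤ m → ∀ x ∈ I.radical, x ^ m ∈ I := by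
  obtain ⟨n, hn⟩ := I.exists_radical_pow_le_of_fg hfg
  exact ⟨n, fun m hm x hx ↦ hn (Ideal.pow_le_pow_right hm (Ideal.pow_mem_pow hx m))⟩

theorem isNSemiprimary_of_radical_isPrime {R : Type*} [CommRing R] {I : Ideal R} {n : ℕ}
    (hP : I.radical.IsPrime) (hpow : ∀ x ∈ I.radical, x ^ n ∈ I) : IsNSemiprimary I n := by
  refine ⟨fun hI ↦ hP.ne_top (Ideal.radical_eq_top.mpr hI), fun x y hxy ↦ ?_⟩
  have hmem : x * y ∈ I.radical := ⟨n, by rwa [mul_pow]⟩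
  exact (hP.mem_or_mem hmem).imp (hpow x) (hpow y)

theorem exists_isNSemiprimary_of_radical_isPrime_general {R : Type*} [CommRing R]
    (I : Ideal R) (hfg : I.radical.FG) (hP : I.radical.IsPrime) :
    ∃ n : ℕ, 0 < n ∧ ∀ m : ℕ, n ≤ m → IsNSemiprimary I m := by
  obtain ⟨n, hpow⟩ := exists_forall_pow_mem_of_fg_radical hfg
  exact ⟨n + 1, n.succ_pos, fun m hm ↦
    isNSemiprimary_of_radical_isPrime hP (hpow m (n.le_succ.trans hm))⟩

/-- Let `I` be a proper ideal of a commutative Noetherian ring `R` such that `√I` is a prime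
ideal of `R` (i.e., `I` is semiprimary). Then there is a positive integer `n` such that `I`
is an `m`-semiprimary ideal of `R` for every integer `m ≥ n`. -/
theorem exists_isNSemiprimary_of_radical_isPrime {R : Type*} [CommRing R]
    [IsNoetherianRing R] (I : Ideal R) (hI : I ≠ ⊤) (hP : I.radical.IsPrime) :
    ∃ n : ℕ, 0 < n ∧ ∀ m : ℕ, n ≤ m → IsNSemiprimary I m :=
  exists_isNSemiprimary_of_radical_isPrime_general I I.radical.fg_of_isNoetherianRing hP
end

section
/- Let P_1 ⊆ P_2 ⊆ ... ⊆ P_k be prime ideals of a commutative ring R and n_1, ..., n_k positive integers, and suppose the product I = P_1^{n_1} ··· P_k^{n_k} is a proper ideal of R. Then I is an m-semiprimary ideal of R for every integer m ≥ n_1 + ··· + n_k. -/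
theorem isNSemiprimary_of_pow_le_of_le {R : Type*} [CommRing R] {I p : Ideal R} {n : ℕ}
    (hp : p.IsPrime) (hpow : p ^ n ≤ I) (hle : I ≤ p) : IsNSemiprimary I n := by
  have hpow_mem {z : R} (hz : z ^ n ∈ p) : z ^ n ∈ I :=
    hpow (Ideal.pow_mem_pow (hp.mem_of_pow_mem n hz) n)
  exact ⟨ne_top_of_le_ne_top hp.ne_top hle,
    fun _ _ hxy ↦ (hp.mem_or_mem (hle hxy)).imp hpow_mem hpow_mem⟩

theorem pow_sum_le_prod_pow {ι M : Type*} [CommMonoid M] [Preorder M] [MulLeftMono M]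
    {s : Finset ι} {a : M} {f : ι → M} (e : ι → ℕ) (h : ∀ i ∈ s, a ≤ f i) :
    a ^ ∑ i ∈ s, e i ≤ ∏ i ∈ s, f i ^ e i := by
  rw [← Finset.prod_pow_eq_pow_sum]
  exact Finset.prod_le_prod' fun i hi ↦ pow_le_pow_left' (h i hi) (e i)

theorem prod_ideal_pow_le_of_mem {ι R : Type*} [CommSemiring R] {s : Finset ι} {j : ι}
    (P : ι → Ideal R) {e : ι → ℕ} (hj : j ∈ s) (hej : e j ≠ 0) :
    ∏ i ∈ s, P i ^ e i ≤ P j :=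
  Ideal.le_of_dvd <| (dvd_pow_self (P j) hej).trans <|
    Finset.dvd_prod_of_mem (fun i ↦ P i ^ e i) hj

theorem isNSemiprimary_of_prod_prime_pows_general {ι R : Type*} [CommRing R]
    {s : Finset ι} {P : ι → Ideal R} {e : ι → ℕ} {j : ι} {m : ℕ}
    (hj : j ∈ s) (hprime : (P j).IsPrime) (hmin : ∀ i ∈ s, P j ≤ P i) (hej : e j ≠ 0)
    (hm : ∑ i ∈ s, e i ≤ m) :
    IsNSemiprimary (∏ i ∈ s, P i ^ e i) m :=
  isNSemiprimary_of_pow_le_of_le hprime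
    ((Ideal.pow_le_pow_right hm).trans (pow_sum_le_prod_pow e hmin))
    (prod_ideal_pow_le_of_mem P hj hej)

/-- Let `P 0 ⊆ P 1 ⊆ ⋯ ⊆ P (k-1)` be prime ideals of a commutative ring `R` and
`e 0, …, e (k-1)` positive integers, and suppose `I = P 0 ^ e 0 ⋯ P (k-1) ^ e (k-1)` is a
proper ideal of `R`. Then `I` is an `m`-semiprimary ideal of `R` for every integer
`m ≥ e 0 + ⋯ + e (k-1)`. -/
theorem isNSemiprimary_of_prod_prime_pows {R : Type*} [CommRing R]
    (k : ℕ) (hk : 0 < k) (P : Fin k → Ideal R) (hPprime : ∀ i, (P i).IsPrime)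
    (hPchain : Monotone P) (e : Fin k → ℕ) (he : ∀ i, 0 < e i)
    (I : Ideal R) (hI : I = ∏ i, P i ^ e i) (hproper : I ≠ ⊤)
    (m : ℕ) (hm : ∑ i, e i ≤ m) :
    IsNSemiprimary I m := by
  subst hI
  exact isNSemiprimary_of_prod_prime_pows_general (Finset.mem_univ ⟨0, hk⟩) (hPprime _)
    (fun i _ ↦ hPchain (Fin.mk_le_of_le_val i.val.zero_le)) (he _).ne' hm
end

section
/- Let I be an n-primary ideal of a commutative ring R. Then I is an n-semiprimary ideal of R. -/
/-- A proper ideal `I` of a commutative ring `R` is an `n`-primary (uniformly primary) ideal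
of `R` if whenever `x * y ∈ I` for `x, y ∈ R`, then `x ∈ I` or `y^n ∈ I`. -/
def IsNPrimary {R : Type*} [CommRing R] (I : Ideal R) (n : ℕ) : Prop :=
  I ≠ ⊤ ∧ ∀ x y : R, x * y ∈ I → x ∈ I ∨ y ^ n ∈ I

theorem IsNPrimary.mem_or_pow_mem_of_mul_pow_mem {R : Type*} [CommRing R] {I : Ideal R} {n : ℕ}
    (hI : IsNPrimary I n) {x y : R} {m : ℕ} (hxy : x * y ^ m ∈ I) : x ∈ I ∨ y ^ n ∈ I := by
  induction m with
  | zero => exact .inl (by simpa using hxy)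
  | succ m ih =>
    have hmul : (x * y ^ m) * y ∈ I := by rwa [mul_assoc, ← pow_succ]
    exact (hI.2 _ _ hmul).elim ih .inr

/-- Let `I` be an `n`-primary ideal of a commutative ring `R`. Then `I` is an
`n`-semiprimary ideal of `R`. -/
theorem isNSemiprimary_of_isNPrimary {R : Type*} [CommRing R]
    (n : ℕ) (hn : 0 < n) (I : Ideal R) (hI : IsNPrimary I n) :
    IsNSemiprimary I n :=
  ⟨hI.1, fun _ _ hxy => hI.mem_or_pow_mem_of_mul_pow_mem hxy⟩
end

section
/- Let I be an n-semiprimary ideal of a commutative ring R. If x^m y^k ∈ I for x, y ∈ R and positive integers m and k, then x^n ∈ I or y^n ∈ I. In particular, if x^m ∈ I for some x ∈ R and positive integer m, then x^n ∈ I. -/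
/-! An `n`-semiprimary ideal contains the `n`-th power of every element of its radical, and
consequently its radical is prime. A product `x ^ m * y ^ k` in the ideal therefore has `x` or `y`
in the radical, whose `n`-th power is then back in the ideal. -/

namespace IsNSemiprimary

variable {R : Type*} [CommRing R] {I : Ideal R} {n : ℕ}

theorem pow_mem_of_pow_pow_mem (hI : IsNSemiprimary I n) {x : R} {m : ℕ}
    (h : (x ^ m) ^ n ∈ I) : x ^ n ∈ I := by
  induction m with
  | zero =>
    have one_mem : (1 : R) ∈ I := by simpa only [pow_zero, one_pow] using h
    exact absurd ((Ideal.eq_top_iff_one I).mpr one_mem) hI.1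
  | succ m ih =>
    rw [pow_succ, mul_pow] at h
    exact (hI.2 _ _ h).elim ih id

theorem pow_mem_of_mem_radical (hI : IsNSemiprimary I n) (hn : 0 < n) {x : R}
    (hx : x ∈ I.radical) : x ^ n ∈ I := by
  obtain ⟨m, hm⟩ := hx
  exact hI.pow_mem_of_pow_pow_mem (Ideal.pow_mem_of_mem I hm n hn)

theorem isPrime_radical (hI : IsNSemiprimary I n) (hn : 0 < n) : I.radical.IsPrime where
  ne_top' := Ideal.radical_eq_top.not.mpr hI.1
  mem_or_mem' {x y} hxy := by
    have pow_mul_pow_mem : x ^ n * y ^ n ∈ I := mul_pow x y n ▸ hI.pow_mem_of_mem_radical hn hxy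
    exact (hI.2 x y pow_mul_pow_mem).imp (⟨n, ·⟩) (⟨n, ·⟩)

end IsNSemiprimary

/-- Let `I` be an `n`-semiprimary ideal of a commutative ring `R`. If `x^m * y^k ∈ I` for
`x, y ∈ R` and positive integers `m` and `k`, then `x^n ∈ I` or `y^n ∈ I`. In particular,
if `x^m ∈ I` for some `x ∈ R` and positive integer `m`, then `x^n ∈ I`. -/
theorem pow_mem_of_isNSemiprimary {R : Type*} [CommRing R]
    (n : ℕ) (hn : 0 < n) (I : Ideal R) (hI : IsNSemiprimary I n) :
    (∀ x y : R, ∀ m k : ℕ, 0 < m → 0 < k → x ^ m * y ^ k ∈ I → x ^ n ∈ I ∨ y ^ n ∈ I) ∧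
    (∀ x : R, ∀ m : ℕ, 0 < m → x ^ m ∈ I → x ^ n ∈ I) := by
  have radical_isPrime : I.radical.IsPrime := hI.isPrime_radical hn
  constructor
  · intro x y m k _ _ hxy
    have mem_or_mem : x ∈ I.radical ∨ y ∈ I.radical :=
      (radical_isPrime.mem_or_mem (Ideal.le_radical hxy)).imp
        (radical_isPrime.mem_of_pow_mem m) (radical_isPrime.mem_of_pow_mem k)
    exact mem_or_mem.imp (hI.pow_mem_of_mem_radical hn) (hI.pow_mem_of_mem_radical hn)
  · intro x m _ hx
    exact hI.pow_mem_of_mem_radical hn ⟨m, hx⟩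
end

section
/- Let R be a commutative ring of Krull dimension 0 and let I be a proper ideal of R containing the nilradical nil(R). Then for any positive integer n, I is an n-semiprimary ideal of R if and only if I is a prime ideal of R. -/
/-!
The radical of an `n`-semiprimary ideal is prime, so the point is that every ideal containing the
nilradical of a zero-dimensional ring is radical. This can be checked at each maximal ideal `P`:
the localization at `P` is a zero-dimensional local ring, so its maximal ideal is its nilradical,
which is the extension of the nilradical of `R`. An ideal containing it is either the maximal ideal
or the whole local ring, and both are radical.
-/

section Semiprimary

variable {R : Type*} [CommRing R] {I : Ideal R} {n : ℕ}

theorem IsNSemiprimary.isPrime_radical_s7 (h : IsNSemiprimary I n) (hn : 0 < n) :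
    I.radical.IsPrime := by
  obtain ⟨I_ne_top, mem_or_mem⟩ := h
  refine ⟨mt Ideal.radical_eq_top.mp I_ne_top, fun {x y} ⟨m, hxy⟩ ↦ ?_⟩
  have hpow : (x ^ m) ^ n * (y ^ m) ^ n ∈ I := by
    rw [← mul_pow, ← mul_pow]
    exact I.pow_mem_of_mem hxy n hn
  have mem_radical {z : R} (hz : (z ^ m) ^ n ∈ I) : z ∈ I.radical :=
    ⟨m * n, by rwa [pow_mul]⟩
  exact (mem_or_mem _ _ hpow).imp mem_radical mem_radical

theorem isNSemiprimary_of_isPrime (hI : I.IsPrime) (n : ℕ) : IsNSemiprimary I n :=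
  ⟨hI.ne_top, fun _ _ ↦ hI.mem_or_mem⟩

theorem isNSemiprimary_iff_isPrime_of_isRadical (hI : I.IsRadical) (hn : 0 < n) :
    IsNSemiprimary I n ↔ I.IsPrime :=
  ⟨fun h ↦ hI.radical ▸ h.isPrime_radical_s7 hn, fun h ↦ isNSemiprimary_of_isPrime h n⟩

end Semiprimary

section Radical

variable {R : Type*} [CommSemiring R] {I : Ideal R}

theorem isRadical_of_isMaximal_le {P : Ideal R} (hP : P.IsMaximal) (hPI : P ≤ I) :
    I.IsRadical := by
  by_cases hI : I = ⊤
  · exact fun _ _ ↦ hI ▸ Submodule.mem_top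
  · exact hP.eq_of_le hI hPI ▸ hP.isPrime.isRadical

theorem isRadical_of_localization_maximal
    (h : ∀ (P : Ideal R) [P.IsMaximal],
      (I.map (algebraMap R (Localization.AtPrime P))).IsRadical) :
    I.IsRadical :=
  Ideal.le_of_localization_maximal fun P _ ↦
    (Ideal.map_radical_le _).trans (h P)

theorem map_nilradical_atPrime_eq_maximalIdeal [Ring.KrullDimLE 0 R] (P : Ideal R) [P.IsPrime] :
    (nilradical R).map (algebraMap R (Localization.AtPrime P)) =
      IsLocalRing.maximalIdeal (Localization.AtPrime P) := by
  have : Ring.KrullDimLE 0 (Localization.AtPrime P) :=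
    .of_isLocalization P P.mem_minimalPrimes_of_krullDimLE_zero _
  calc (nilradical R).map (algebraMap R (Localization.AtPrime P))
      = nilradical (Localization.AtPrime P) := by
        simp only [nilradical, IsLocalization.map_radical P.primeCompl, Ideal.zero_eq_bot,
          Ideal.map_bot]
    _ = IsLocalRing.maximalIdeal (Localization.AtPrime P) :=
        Ring.KrullDimLE.nilradical_eq_maximalIdeal _

theorem isRadical_of_nilradical_le [Ring.KrullDimLE 0 R] (hnil : nilradical R ≤ I) :
    I.IsRadical :=
  isRadical_of_localization_maximal fun P _ ↦
    isRadical_of_isMaximal_le (IsLocalRing.maximalIdeal.isMaximal _) <|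
      map_nilradical_atPrime_eq_maximalIdeal P ▸ Ideal.map_mono hnil

end Radical

/-- Let `R` be a commutative ring of Krull dimension `0` and let `I` be a proper ideal of
`R` containing the nilradical `nil(R)`. Then, for any positive integer `n`, `I` is an
`n`-semiprimary ideal of `R` if and only if `I` is a prime ideal of `R`. -/
theorem isNSemiprimary_iff_isPrime_of_dim_zero {R : Type*} [CommRing R]
    (hdim : ringKrullDim R = 0) (I : Ideal R) (hI : I ≠ ⊤) (hnil : nilradical R ≤ I)
    (n : ℕ) (hn : 0 < n) :
    IsNSemiprimary I n ↔ I.IsPrime := by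
  have : Ring.KrullDimLE 0 R := Ring.krullDimLE_iff.mpr hdim.le
  exact isNSemiprimary_iff_isPrime_of_isRadical (isRadical_of_nilradical_le hnil) hn
end

section
/- Let R be a commutative ring of characteristic n ≥ 2, let I be a proper ideal of R, let M be an R-module, and let S be a submodule of M with IM ⊆ S. Then I (+) S is an n-semiprimary ideal of the idealization R(+)M if and only if I is an n-semiprimary ideal of R. -/
/-!
Since `(a, m) ^ n = (a ^ n, n • a ^ (n - 1) • m)`, as soon as `n • M ⊆ S` the `n`-th power of
`(a, m)` lies in `I (+) S` exactly when `a ^ n ∈ I`. Being `n`-semiprimary is a condition on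
`n`-th powers only, because `x ^ n * y ^ n = (x * y) ^ n`, so it transfers along the surjective
projection `R (+) M → R`. In characteristic `n` one has `n • M = 0`.
-/

theorem isNSemiprimary_iff_of_pow_mem_iff {A B F : Type*} [CommRing A] [CommRing B]
    [FunLike F A B] [MonoidHomClass F A B] {f : F} (hf : Function.Surjective f) {n : ℕ}
    {J : Ideal A} {I : Ideal B} (hpow : ∀ x, x ^ n ∈ J ↔ f x ^ n ∈ I) :
    IsNSemiprimary J n ↔ IsNSemiprimary I n := by
  have one_mem_iff : 1 ∈ J ↔ 1 ∈ I := by simpa using hpow 1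
  simp only [IsNSemiprimary, Ideal.ne_top_iff_one, one_mem_iff, ← mul_pow, hpow, map_mul,
    hf.forall]

theorem snd_pow_mem_of_nsmul_mem {R M : Type*} [CommSemiring R] [AddCommMonoid M]
    [Module R M] [Module Rᵐᵒᵖ M] [IsCentralScalar R M] {n : ℕ} {S : Submodule R M}
    (hS : ∀ m : M, n • m ∈ S) (x : TrivSqZeroExt R M) : (x ^ n).snd ∈ S := by
  rw [TrivSqZeroExt.snd_pow]
  exact hS _

theorem idealization_isNSemiprimary_iff_general {R M : Type*} [CommRing R] [AddCommGroup M]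
    [Module R M] [Module Rᵐᵒᵖ M] [IsCentralScalar R M] {n : ℕ}
    {I : Ideal R} {S : Submodule R M} (hS : ∀ m : M, n • m ∈ S)
    {J : Ideal (TrivSqZeroExt R M)}
    (hJ : ∀ x : TrivSqZeroExt R M, x ∈ J ↔ x.fst ∈ I ∧ x.snd ∈ S) :
    IsNSemiprimary J n ↔ IsNSemiprimary I n := by
  have pow_mem_iff (x : TrivSqZeroExt R M) : x ^ n ∈ J ↔ x.fst ^ n ∈ I := by
    rw [hJ, TrivSqZeroExt.fst_pow, and_iff_left (snd_pow_mem_of_nsmul_mem hS x)]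
  exact isNSemiprimary_iff_of_pow_mem_iff (f := TrivSqZeroExt.fstHom R R M)
    TrivSqZeroExt.fst_surjective pow_mem_iff

/-- Let `R` be a commutative ring of characteristic `n ≥ 2`, let `I` be a proper ideal of
`R`, let `M` be an `R`-module, and let `S` be a submodule of `M` with `IM ⊆ S`. Then the
ideal `I (+) S = {(a, s) | a ∈ I, s ∈ S}` is an `n`-semiprimary ideal of the idealization
`R (+) M` (realized as `TrivSqZeroExt R M`) if and only if `I` is an `n`-semiprimary ideal
of `R`. -/
theorem idealization_isNSemiprimary_iff {R M : Type*} [CommRing R] [AddCommGroup M]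
    [Module R M] [Module Rᵐᵒᵖ M] [IsCentralScalar R M]
    (n : ℕ) (hn : 2 ≤ n) [CharP R n]
    (I : Ideal R) (hproper : I ≠ ⊤) (S : Submodule R M)
    (hS : I • (⊤ : Submodule R M) ≤ S)
    (J : Ideal (TrivSqZeroExt R M))
    (hJ : ∀ x : TrivSqZeroExt R M, x ∈ J ↔ x.fst ∈ I ∧ x.snd ∈ S) :
    IsNSemiprimary J n ↔ IsNSemiprimary I n := by
  refine idealization_isNSemiprimary_iff_general (fun m => ?_) hJ
  rw [← Nat.cast_smul_eq_nsmul R, CharP.cast_eq_zero, zero_smul]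
  exact S.zero_mem
end

section
/- Let I be a prime ideal of an integral domain R with quotient field K, and let n be a positive integer. Then I is an n-powerful semiprimary ideal of R if and only if I is an n-powerful ideal of R. -/
/-- A proper ideal `I` of an integral domain `R` with quotient field `K` is an `n`-powerful
semiprimary ideal of `R` if whenever `x^n * y^n ∈ I` for `x, y ∈ K`, then `x^n ∈ I` or
`y^n ∈ I` (membership in `I` and `R` is via the embedding `algebraMap R K`). -/
def IsNPowerfulSemiprimary (R K : Type*) [CommRing R] [Field K] [Algebra R K]
    (I : Ideal R) (n : ℕ) : Prop :=
  I ≠ ⊤ ∧ ∀ x y : K, (∃ a ∈ I, algebraMap R K a = x ^ n * y ^ n) →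
    (∃ a ∈ I, algebraMap R K a = x ^ n) ∨ (∃ a ∈ I, algebraMap R K a = y ^ n)

/-- A proper ideal `I` of an integral domain `R` with quotient field `K` is an `n`-powerful
ideal of `R` if whenever `x^n * y^n ∈ I` for `x, y ∈ K`, then `x^n ∈ R` or `y^n ∈ R`. -/
def IsNPowerful (R K : Type*) [CommRing R] [Field K] [Algebra R K]
    (I : Ideal R) (n : ℕ) : Prop :=
  I ≠ ⊤ ∧ ∀ x y : K, (∃ a ∈ I, algebraMap R K a = x ^ n * y ^ n) →
    (∃ r : R, algebraMap R K r = x ^ n) ∨ (∃ r : R, algebraMap R K r = y ^ n)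

/-!
For `x`, `y` nonzero, `x * y = (x ^ 2 / y) * (y ^ 2 / x)`. If `x ^ n * y ^ n ∈ I` and `I` is
`n`-powerful, then, up to symmetry, `x ^ (2 * n) / y ^ n ∈ R`; multiplying by `x ^ n * y ^ n` gives
`x ^ (3 * n) ∈ I`. When `I` is radical, this exponent descends to `x ^ n ∈ I`: from
`x ^ n * (x ^ n) ^ k ∈ I`, one of `x ^ n` and `(x ^ n) ^ k` lies in `R`, hence in `I`, as it has a
power in `I`.
-/

section CoeSubmodule

open IsLocalization (coeSubmodule)

variable {R A : Type*} [CommSemiring R] [CommSemiring A] [Algebra R A] {I : Ideal R}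

theorem mem_coeSubmodule_of_pow_mem [FaithfulSMul R A] (hI : I.IsRadical) {z : A}
    (hz : z ∈ Set.range (algebraMap R A)) {k : ℕ} (hzk : z ^ k ∈ coeSubmodule A I) :
    z ∈ coeSubmodule A I := by
  obtain ⟨r, rfl⟩ := hz
  obtain ⟨a, ha, har⟩ := hzk
  have hra : r ^ k = a :=
    FaithfulSMul.algebraMap_injective R A ((map_pow _ r k).trans har.symm)
  exact ⟨r, hI ⟨k, hra ▸ ha⟩, rfl⟩

theorem pow_mem_coeSubmodule {z : A} (hz : z ∈ coeSubmodule A I) {k : ℕ}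
    (hk : k ≠ 0) : z ^ k ∈ coeSubmodule A I := by
  obtain ⟨a, ha, rfl⟩ := hz
  exact ⟨a ^ k, I.pow_mem_of_mem ha k hk.pos, map_pow (algebraMap R A) a k⟩

end CoeSubmodule

section Powerful

open IsLocalization (coeSubmodule)

variable {R K : Type*} [CommRing R] [Field K] [Algebra R K] {I : Ideal R} {n : ℕ}

theorem IsNPowerfulSemiprimary.isNPowerful (h : IsNPowerfulSemiprimary R K I n) :
    IsNPowerful R K I n :=
  ⟨h.1, fun x y hxy ↦ (h.2 x y hxy).imp (fun ⟨a, _, ha⟩ ↦ ⟨a, ha⟩) fun ⟨a, _, ha⟩ ↦ ⟨a, ha⟩⟩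

namespace IsNPowerful

theorem pow_mem_coeSubmodule_of_pow_pow_mem [FaithfulSMul R K] (h : IsNPowerful R K I n)
    (hI : I.IsRadical) {x : K} {k : ℕ} (hk : k ≠ 0) (hx : (x ^ n) ^ k ∈ coeSubmodule K I) :
    x ^ n ∈ coeSubmodule K I := by
  induction k, Nat.one_le_iff_ne_zero.mpr hk using Nat.le_induction with
  | base => simpa only [pow_one] using hx
  | succ k hk₁ ih =>
    have hk₀ : k ≠ 0 := Nat.one_le_iff_ne_zero.mp hk₁
    have hmul : x ^ n * (x ^ k) ^ n ∈ coeSubmodule K I := by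
      rwa [pow_right_comm x k n, ← pow_succ']
    -- `hmul` is definitionally the condition `∃ a ∈ I, algebraMap R K a = _` expected by `h.2`.
    rcases h.2 x (x ^ k) hmul with hxR | hxkR
    · exact mem_coeSubmodule_of_pow_mem hI hxR hx
    · rw [pow_right_comm] at hxkR
      have hpow : ((x ^ n) ^ k) ^ (k + 1) ∈ coeSubmodule K I := by
        rw [pow_right_comm]
        exact pow_mem_coeSubmodule hx hk₀
      exact ih hk₀ (mem_coeSubmodule_of_pow_mem hI hxkR hpow)

theorem pow_mem_coeSubmodule_of_sq_div_mem_range [FaithfulSMul R K] (h : IsNPowerful R K I n)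
    (hI : I.IsRadical) {x y : K} (hy : y ^ n ≠ 0)
    (hxy : x ^ n * y ^ n ∈ coeSubmodule K I)
    (hR : (x ^ 2 / y) ^ n ∈ Set.range (algebraMap R K)) :
    x ^ n ∈ coeSubmodule K I := by
  obtain ⟨r, hr⟩ := hR
  have hcube : (x ^ n) ^ 3 = r • (x ^ n * y ^ n) := by
    rw [Algebra.smul_def, hr, div_pow, pow_right_comm x 2]
    field_simp
  exact h.pow_mem_coeSubmodule_of_pow_pow_mem hI three_ne_zero (hcube ▸ Submodule.smul_mem _ r hxy)

theorem isNPowerfulSemiprimary [FaithfulSMul R K] (h : IsNPowerful R K I n) (hI : I.IsRadical) :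
    IsNPowerfulSemiprimary R K I n := by
  refine ⟨h.1, fun x y hxy ↦ ?_⟩
  by_cases hx : x ^ n = 0
  · exact .inl ⟨0, I.zero_mem, by rw [hx, map_zero]⟩
  by_cases hy : y ^ n = 0
  · exact .inr ⟨0, I.zero_mem, by rw [hy, map_zero]⟩
  have hsplit : (x ^ 2 / y) ^ n * (y ^ 2 / x) ^ n = x ^ n * y ^ n := by
    rw [div_pow, div_pow, pow_right_comm x 2, pow_right_comm y 2]
    field_simp
  refine (h.2 (x ^ 2 / y) (y ^ 2 / x) (hsplit ▸ hxy)).imp ?_ ?_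
  · exact h.pow_mem_coeSubmodule_of_sq_div_mem_range hI hy hxy
  · exact h.pow_mem_coeSubmodule_of_sq_div_mem_range hI hx (mul_comm (x ^ n) (y ^ n) ▸ hxy)

end IsNPowerful

theorem isNPowerfulSemiprimary_iff_isNPowerful_general [FaithfulSMul R K] (hI : I.IsRadical) :
    IsNPowerfulSemiprimary R K I n ↔ IsNPowerful R K I n :=
  ⟨fun h ↦ h.isNPowerful, fun h ↦ h.isNPowerfulSemiprimary hI⟩

end Powerful

/-- Let `I` be a prime ideal of an integral domain `R` with quotient field `K`, and let `n`
be a positive integer. Then `I` is an `n`-powerful semiprimary ideal of `R` if and only if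
`I` is an `n`-powerful ideal of `R`. -/
theorem isNPowerfulSemiprimary_iff_isNPowerful {R K : Type*} [CommRing R] [IsDomain R]
    [Field K] [Algebra R K] [IsFractionRing R K]
    (I : Ideal R) (hI : I.IsPrime) (n : ℕ) (hn : 0 < n) :
    IsNPowerfulSemiprimary R K I n ↔ IsNPowerful R K I n :=
  isNPowerfulSemiprimary_iff_isNPowerful_general hI.isRadical
end

section
/- Let P ⊆ Q be prime ideals of an integral domain R with quotient field K, and let n be a positive integer. If Q is an n-powerful semiprimary ideal of R, then P is an n-powerful semiprimary ideal of R. -/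
/-!
Suppose `x ^ n * y ^ n ∈ P`, with say `x ^ n ∈ Q` and `y ^ n ≠ 0`. Since
`(x / y) ^ n * y ^ n = x ^ n ∈ Q`, either `y ^ n ∈ Q` or `(x / y) ^ n ∈ Q`. In the first case
`x ^ n` and `y ^ n` both lie in `R`, where `P` is prime. In the second case
`x ^ n * x ^ n = (x / y) ^ n * (x ^ n * y ^ n) ∈ P`, so `x ^ n ∈ P`.
-/

section

open IsLocalization

section

variable {R S : Type*} [CommSemiring R] [CommSemiring S] [Algebra R S] {I P : Ideal R} {x y : S}

theorem coeSubmodule_subset_range :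
    (coeSubmodule S I : Set S) ⊆ Set.range (algebraMap R S) :=
  Set.image_subset_range _ _

theorem mul_mem_coeSubmodule_of_mem_range (hx : x ∈ Set.range (algebraMap R S))
    (hy : y ∈ coeSubmodule S I) : x * y ∈ coeSubmodule S I := by
  obtain ⟨a, rfl⟩ := hx
  simpa only [Algebra.smul_def] using Submodule.smul_mem _ a hy

variable [FaithfulSMul R S]

theorem algebraMap_mem_coeSubmodule_iff {a : R} :
    algebraMap R S a ∈ coeSubmodule S I ↔ a ∈ I :=
  (FaithfulSMul.algebraMap_injective R S).mem_set_image

theorem mem_or_mem_coeSubmodule_of_mul_mem (hP : P.IsPrime)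
    (hx : x ∈ Set.range (algebraMap R S)) (hy : y ∈ Set.range (algebraMap R S))
    (hxy : x * y ∈ coeSubmodule S P) : x ∈ coeSubmodule S P ∨ y ∈ coeSubmodule S P := by
  obtain ⟨a, rfl⟩ := hx
  obtain ⟨b, rfl⟩ := hy
  simp only [← map_mul, algebraMap_mem_coeSubmodule_iff] at hxy ⊢
  exact hP.mem_or_mem hxy

end

variable {R K : Type*} [CommRing R] [Field K] [Algebra R K] {P Q : Ideal R} {n : ℕ} {x y : K}

theorem isNPowerfulSemiprimary_iff_coeSubmodule :
    IsNPowerfulSemiprimary R K Q n ↔ Q ≠ ⊤ ∧ ∀ x y : K, x ^ n * y ^ n ∈ coeSubmodule K Q →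
      x ^ n ∈ coeSubmodule K Q ∨ y ^ n ∈ coeSubmodule K Q :=
  Iff.rfl

theorem IsNPowerfulSemiprimary.div_pow_mem_or_pow_mem (h : IsNPowerfulSemiprimary R K Q n)
    (hy : y ^ n ≠ 0) (hx : x ^ n ∈ coeSubmodule K Q) :
    (x / y) ^ n ∈ coeSubmodule K Q ∨ y ^ n ∈ coeSubmodule K Q := by
  refine (isNPowerfulSemiprimary_iff_coeSubmodule.1 h).2 (x / y) y ?_
  rwa [div_pow, div_mul_cancel₀ _ hy]

theorem IsNPowerfulSemiprimary.pow_mem_or_pow_mem_of_isPrime [FaithfulSMul R K]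
    (h : IsNPowerfulSemiprimary R K Q n) (hP : P.IsPrime) (hx : x ^ n ∈ coeSubmodule K Q)
    (hxy : x ^ n * y ^ n ∈ coeSubmodule K P) :
    x ^ n ∈ coeSubmodule K P ∨ y ^ n ∈ coeSubmodule K P := by
  have hxR := coeSubmodule_subset_range hx
  by_cases hy : y ^ n = 0
  · exact Or.inr (hy ▸ zero_mem _)
  rcases h.div_pow_mem_or_pow_mem hy hx with hdiv | hyQ
  · have hxx : x ^ n * x ^ n = (x / y) ^ n * (x ^ n * y ^ n) := by
      rw [div_pow]
      field_simp
    have hxxP : x ^ n * x ^ n ∈ coeSubmodule K P :=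
      hxx ▸ mul_mem_coeSubmodule_of_mem_range (coeSubmodule_subset_range hdiv) hxy
    exact Or.inl (or_self_iff.1 (mem_or_mem_coeSubmodule_of_mul_mem hP hxR hxR hxxP))
  · exact mem_or_mem_coeSubmodule_of_mul_mem hP hxR (coeSubmodule_subset_range hyQ) hxy

theorem isNPowerfulSemiprimary_of_le_general [FaithfulSMul R K] (hP : P.IsPrime) (hPQ : P ≤ Q)
    (h : IsNPowerfulSemiprimary R K Q n) : IsNPowerfulSemiprimary R K P n := by
  refine isNPowerfulSemiprimary_iff_coeSubmodule.2 ⟨hP.ne_top, fun x y hxy ↦ ?_⟩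
  have hxyQ : x ^ n * y ^ n ∈ coeSubmodule K Q := coeSubmodule_mono K hPQ hxy
  rcases (isNPowerfulSemiprimary_iff_coeSubmodule.1 h).2 x y hxyQ with hx | hy
  · exact h.pow_mem_or_pow_mem_of_isPrime hP hx hxy
  · exact (h.pow_mem_or_pow_mem_of_isPrime hP hy (mul_comm (x ^ n) _ ▸ hxy)).symm

end

/-- Let `P ⊆ Q` be prime ideals of an integral domain `R` with quotient field `K`, and let
`n` be a positive integer. If `Q` is an `n`-powerful semiprimary ideal of `R`, then `P` is
an `n`-powerful semiprimary ideal of `R`. -/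
theorem isNPowerfulSemiprimary_of_le {R K : Type*} [CommRing R] [IsDomain R]
    [Field K] [Algebra R K] [IsFractionRing R K]
    (P Q : Ideal R) (hP : P.IsPrime) (hQ : Q.IsPrime) (hPQ : P ≤ Q)
    (n : ℕ) (hn : 0 < n) (h : IsNPowerfulSemiprimary R K Q n) :
    IsNPowerfulSemiprimary R K P n :=
  isNPowerfulSemiprimary_of_le_general hP hPQ h
end

section
/- Let R be an n-PVD for some positive integer n. Then R is quasilocal, i.e., R has a unique maximal ideal. -/
/-!
If `x ∈ I` and `y ∈ J`, then `(x / y) ^ n * y ^ n = x ^ n` lies in `I`, so an `n`-powerful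
semiprimary ideal `I` contains `y ^ n` or `(x / y) ^ n`; in the second case `x ^ n ∈ J`. Hence `I`
and `J` are comparable up to radicals, and a single maximal ideal that is `n`-powerful semiprimary
is comparable with, hence equal to, every other one.
-/

namespace IsNPowerfulSemiprimary

variable {R K : Type*} [CommRing R] [Field K] [Algebra R K] [FaithfulSMul R K]
  {I : Ideal R} {n : ℕ}

theorem pow_dvd_pow_of_mem_of_notMem (h : IsNPowerfulSemiprimary R K I n) {x y : R}
    (hx : x ^ n ∈ I) (hy : y ^ n ∉ I) : y ^ n ∣ x ^ n := by
  have hinj : Function.Injective (algebraMap R K) := FaithfulSMul.algebraMap_injective R K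
  have hyn : algebraMap R K y ^ n ≠ 0 := by
    rw [← map_pow]
    exact (map_ne_zero_iff _ hinj).mpr fun h0 => hy (h0 ▸ I.zero_mem)
  have hprod : algebraMap R K (x ^ n) =
      (algebraMap R K x / algebraMap R K y) ^ n * algebraMap R K y ^ n := by
    rw [div_pow, div_mul_cancel₀ _ hyn, map_pow]
  rcases h.2 _ _ ⟨x ^ n, hx, hprod⟩ with ⟨a, -, ha⟩ | ⟨b, hb, hby⟩
  · refine ⟨a, hinj ?_⟩
    rw [hprod, ← ha, map_mul, map_pow, mul_comm]
  · rw [← map_pow] at hby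
    exact absurd (hinj hby ▸ hb) hy

theorem le_radical_or_le_radical (h : IsNPowerfulSemiprimary R K I n) (hn : 0 < n)
    (J : Ideal R) : I ≤ J.radical ∨ J ≤ I.radical := by
  by_contra! hIJ
  obtain ⟨x, hxI, hxJ⟩ := SetLike.not_le_iff_exists.mp hIJ.1
  obtain ⟨y, hyJ, hyI⟩ := SetLike.not_le_iff_exists.mp hIJ.2
  have hdvd : y ^ n ∣ x ^ n :=
    h.pow_dvd_pow_of_mem_of_notMem (I.pow_mem_of_mem hxI n hn) fun hyn => hyI ⟨n, hyn⟩
  exact hxJ ⟨n, J.mem_of_dvd hdvd (J.pow_mem_of_mem hyJ n hn)⟩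

end IsNPowerfulSemiprimary

theorem nPVD_quasilocal_general {R K : Type*} [CommRing R] [Field K] [Algebra R K]
    [FaithfulSMul R K] {n : ℕ} (hn : 0 < n) {M : Ideal R} (hM : M.IsMaximal)
    (h : IsNPowerfulSemiprimary R K M n) : ∃! N : Ideal R, N.IsMaximal := by
  refine ⟨M, hM, fun N hN => ?_⟩
  have hcomp : M ≤ N ∨ N ≤ M := by
    simpa only [hM.isPrime.radical, hN.isPrime.radical] using h.le_radical_or_le_radical hn N
  rcases hcomp with hMN | hNM
  · exact (hM.eq_of_le hN.ne_top hMN).symm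
  · exact hN.eq_of_le hM.ne_top hNM

/-- Let `R` be an `n`-PVD for some positive integer `n`, i.e., every prime ideal of `R` is
an `n`-powerful semiprimary ideal of `R`. Then `R` is quasilocal, i.e., `R` has a unique
maximal ideal. -/
theorem nPVD_quasilocal {R K : Type*} [CommRing R] [IsDomain R]
    [Field K] [Algebra R K] [IsFractionRing R K]
    (n : ℕ) (hn : 0 < n)
    (hPVD : ∀ P : Ideal R, P.IsPrime → IsNPowerfulSemiprimary R K P n) :
    ∃! M : Ideal R, M.IsMaximal := by
  obtain ⟨M, hM⟩ := Ideal.exists_maximal R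
  exact nPVD_quasilocal_general hn hM (hPVD M hM.isPrime)
end

section
/- Let R be an n-divided commutative ring for some positive integer n. Then the set of prime ideals of R is linearly ordered by inclusion. -/
/-- A prime ideal `P` of a commutative ring `R` is an `n`-divided prime ideal of `R` if
`x^n` divides `p^n` in `R` for every `x ∈ R \ P` and `p ∈ P`. -/
def IsNDividedPrime {R : Type*} [CommRing R] (P : Ideal R) (n : ℕ) : Prop :=
  P.IsPrime ∧ ∀ x ∉ P, ∀ p ∈ P, x ^ n ∣ p ^ n

theorem IsNDividedPrime.le_radical_span_singleton {R : Type*} [CommRing R] {P : Ideal R}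
    {n : ℕ} (hP : IsNDividedPrime P n) (hn : n ≠ 0) {x : R} (hx : x ∉ P) :
    P ≤ (Ideal.span {x}).radical := fun p hp ↦
  ⟨n, Ideal.mem_span_singleton.mpr ((dvd_pow_self x hn).trans (hP.2 x hx p hp))⟩

theorem primes_linearly_ordered_of_nDivided_general {R : Type*} [CommSemiring R]
    {P I : Ideal R} (hP : ∀ x ∉ P, P ≤ (Ideal.span {x}).radical) (hI : I.IsRadical) :
    P ≤ I ∨ I ≤ P := by
  refine or_iff_not_imp_right.mpr fun hIP ↦ ?_
  obtain ⟨x, hxI, hxP⟩ := SetLike.not_le_iff_exists.mp hIP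
  calc
    P ≤ (Ideal.span {x}).radical := hP x hxP
    _ ≤ I := hI.radical_le_iff.mpr ((Ideal.span_singleton_le_iff_mem I).mpr hxI)

/-- Let `R` be an `n`-divided commutative ring for some positive integer `n` (i.e., every
prime ideal of `R` is an `n`-divided prime ideal of `R`). Then the set of prime ideals
of `R` is linearly ordered by inclusion. -/
theorem primes_linearly_ordered_of_nDivided {R : Type*} [CommRing R]
    (n : ℕ) (hn : 0 < n)
    (h : ∀ P : Ideal R, P.IsPrime → IsNDividedPrime P n) :
    ∀ P Q : Ideal R, P.IsPrime → Q.IsPrime → P ≤ Q ∨ Q ≤ P := by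
  intro P Q hP hQ
  exact primes_linearly_ordered_of_nDivided_general
    (fun _ hx ↦ (h P hP).le_radical_span_singleton hn.ne' hx) hQ.isRadical
end

section
/- Let P be a prime ideal of an integral domain R with quotient field K, and let n be a positive integer. If P is an n-powerful semiprimary ideal of R, then P is an n-divided prime ideal of R, i.e., x^n divides p^n in R for every x ∈ R \ P and p ∈ P. -/
/-!
If `zⁿ ∈ I` and `yⁿ ∉ I` for `y, z ∈ K`, then `zⁿ = (z / y)ⁿ yⁿ` forces `(z / y)ⁿ ∈ I`. When
`y, z ∈ R`, the quotient of `zⁿ` by `yⁿ` therefore lies in `R`, so `yⁿ` divides `zⁿ` there.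
-/

theorem IsNPowerfulSemiprimary.exists_mem_pow_mul_algebraMap_eq_pow {R K : Type*} [CommRing R]
    [Field K] [Algebra R K] {I : Ideal R} {n : ℕ} (h : IsNPowerfulSemiprimary R K I n) {y z : K}
    (hy : ¬∃ a ∈ I, algebraMap R K a = y ^ n) (hz : ∃ a ∈ I, algebraMap R K a = z ^ n) :
    ∃ a ∈ I, y ^ n * algebraMap R K a = z ^ n := by
  have hy0 : y ^ n ≠ 0 := fun hy0 ↦ hy ⟨0, I.zero_mem, by rw [map_zero, hy0]⟩
  have hprod : (z / y) ^ n * y ^ n = z ^ n := by rw [div_pow, div_mul_cancel₀ _ hy0]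
  obtain ⟨a, haI, ha⟩ := (h.2 (z / y) y (by rwa [hprod])).resolve_right hy
  exact ⟨a, haI, by rw [ha, mul_comm, hprod]⟩

theorem nDivided_of_isNPowerfulSemiprimary_general {R K : Type*} [CommRing R]
    [Field K] [Algebra R K] [FaithfulSMul R K] (I : Ideal R) (n : ℕ)
    (h : IsNPowerfulSemiprimary R K I n) :
    ∀ x, x ^ n ∉ I → ∀ p, p ^ n ∈ I → ∃ a ∈ I, p ^ n = x ^ n * a := by
  intro x hx p hp
  have hinj : Function.Injective (algebraMap R K) := FaithfulSMul.algebraMap_injective R K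
  have hxK : ¬∃ a ∈ I, algebraMap R K a = algebraMap R K x ^ n := by
    rintro ⟨a, haI, ha⟩
    have hax : a = x ^ n := hinj (by rw [ha, map_pow])
    exact hx (hax ▸ haI)
  obtain ⟨a, haI, ha⟩ := h.exists_mem_pow_mul_algebraMap_eq_pow hxK ⟨p ^ n, hp, map_pow _ _ _⟩
  exact ⟨a, haI, hinj (by rw [map_mul, map_pow, map_pow, ha])⟩

/-- Let `P` be a prime ideal of an integral domain `R` with quotient field `K`, and let `n`
be a positive integer. If `P` is an `n`-powerful semiprimary ideal of `R`, then `P` is an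
`n`-divided prime ideal of `R`, i.e., `x^n` divides `p^n` in `R` for every `x ∈ R \ P` and
`p ∈ P`. -/
theorem nDivided_of_isNPowerfulSemiprimary {R K : Type*} [CommRing R] [IsDomain R]
    [Field K] [Algebra R K] [IsFractionRing R K]
    (P : Ideal R) (hP : P.IsPrime) (n : ℕ) (hn : 0 < n)
    (h : IsNPowerfulSemiprimary R K P n) :
    ∀ x ∉ P, ∀ p ∈ P, x ^ n ∣ p ^ n := by
  intro x hx p hp
  obtain ⟨a, -, ha⟩ := nDivided_of_isNPowerfulSemiprimary_general P n h x
    (mt (hP.mem_of_pow_mem n) hx) p (P.pow_mem_of_mem hp n hn)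
  exact ⟨a, ha⟩
end

section
/- Let P be a prime ideal of an integral domain R with quotient field K, and suppose P is an n-powerful semiprimary ideal of R for a positive integer n. Then (i) P is an mn-powerful semiprimary ideal of R for every positive integer m, and (ii) if x ∈ K satisfies x^m ∈ P for some positive integer m, then x^n ∈ P. -/
/-! Raising `x ^ m ∈ I` to the `n`-th power exhibits a product of `m` copies of `x ^ n` lying in
`I`; the semiprimary condition, applied to `(x ^ k) ^ n * x ^ n`, splits these off one at a time. -/

theorem pow_mem_of_pow_mul_mem {M : Type*} [Monoid M] {S : Set M} {n : ℕ}
    (hS : ∀ x y : M, x ^ n * y ^ n ∈ S → x ^ n ∈ S ∨ y ^ n ∈ S)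
    {x : M} {m : ℕ} (hm : 0 < m) (hx : x ^ (m * n) ∈ S) : x ^ n ∈ S := by
  induction m, hm using Nat.le_induction with
  | base => simpa using hx
  | succ k _ ih =>
    have hprod : (x ^ k) ^ n * x ^ n ∈ S := by
      rwa [← pow_mul, ← pow_add, ← Nat.succ_mul]
    rcases hS (x ^ k) x hprod with hk | hx
    · exact ih (by rwa [pow_mul])
    · exact hx

namespace IsNPowerfulSemiprimary

variable {R K : Type*} [CommRing R] [Field K] [Algebra R K] {I : Ideal R} {n : ℕ}

theorem mul_left (h : IsNPowerfulSemiprimary R K I n) (m : ℕ) :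
    IsNPowerfulSemiprimary R K I (m * n) :=
  ⟨h.1, fun x y ↦ by simpa only [pow_mul] using h.2 (x ^ m) (y ^ m)⟩

theorem pow_mem_of_pow_mem (h : IsNPowerfulSemiprimary R K I n) (hn : 0 < n)
    {x : K} {m : ℕ} (hm : 0 < m) (hx : ∃ b ∈ I, algebraMap R K b = x ^ m) :
    ∃ b ∈ I, algebraMap R K b = x ^ n := by
  obtain ⟨b, hb, hbx⟩ := hx
  have hpow : x ^ (m * n) ∈ algebraMap R K '' I :=
    ⟨b ^ n, I.pow_mem_of_mem hb n hn, by rw [map_pow, hbx, pow_mul]⟩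
  exact pow_mem_of_pow_mul_mem h.2 hm hpow

end IsNPowerfulSemiprimary

theorem isNPowerfulSemiprimary_mul_and_pow_mem_general {R K : Type*} [CommRing R]
    [Field K] [Algebra R K] (I : Ideal R) (n : ℕ) (hn : 0 < n)
    (h : IsNPowerfulSemiprimary R K I n) :
    (∀ m : ℕ, IsNPowerfulSemiprimary R K I (m * n)) ∧
    (∀ x : K, ∀ m : ℕ, 0 < m → (∃ b ∈ I, algebraMap R K b = x ^ m) →
      ∃ b ∈ I, algebraMap R K b = x ^ n) :=
  ⟨h.mul_left, fun _ _ hm hx ↦ h.pow_mem_of_pow_mem hn hm hx⟩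

/-- Let `P` be a prime ideal of an integral domain `R` with quotient field `K`, and suppose
`P` is an `n`-powerful semiprimary ideal of `R` for a positive integer `n`. Then (i) `P` is
an `mn`-powerful semiprimary ideal of `R` for every positive integer `m`, and (ii) if
`x ∈ K` satisfies `x^m ∈ P` for some positive integer `m`, then `x^n ∈ P`. -/
theorem isNPowerfulSemiprimary_mul_and_pow_mem {R K : Type*} [CommRing R] [IsDomain R]
    [Field K] [Algebra R K] [IsFractionRing R K]
    (P : Ideal R) (hP : P.IsPrime) (n : ℕ) (hn : 0 < n)
    (h : IsNPowerfulSemiprimary R K P n) :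
    (∀ m : ℕ, 0 < m → IsNPowerfulSemiprimary R K P (m * n)) ∧
    (∀ x : K, ∀ m : ℕ, 0 < m → (∃ b ∈ P, algebraMap R K b = x ^ m) →
      ∃ b ∈ P, algebraMap R K b = x ^ n) := by
  obtain ⟨hmul, hpow⟩ := isNPowerfulSemiprimary_mul_and_pow_mem_general P n hn h
  exact ⟨fun m _ ↦ hmul m, hpow⟩
end
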